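/- Let L_n be the ladder graph (the Cartesian product of the path P_n with P_2), having 2n vertices. Then the composition counts satisfy C(L_1) = 2, C(L_2) = 12, and C(L_n) = 6·C(L_{n-1}) + C(L_{n-2}) for n > 2. -/

import Mathlib

/-- The number of graph compositions of `G`: partitions of the vertex set into
blocks each of which induces a connected subgraph of `G`. -/
noncomputable def numGraphCompositions {V : Type} [Fintype V] [DecidableEq V] (G : SimpleGraph V) : ℕ :=
  Nat.card {P : Finpartition (Finset.univ : Finset V) //
    ∀ s ∈ P.parts, (G.induce (s : Set V)).Connected}

/-- The `n`-th Bell number: the number of set partitions of an `n`-element set. -/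
noncomputable def bell (n : ℕ) : ℕ :=
  Nat.card (Finpartition (Finset.univ : Finset (Fin n)))

/-- The ladder graph `L_n = P_n □ P_2`. -/
abbrev ladderGraph (n : ℕ) : SimpleGraph (Fin n × Fin 2) :=
  SimpleGraph.pathGraph n □ SimpleGraph.pathGraph 2

/-- Connected partitions are determined by which adjacent vertices they join. -/
lemma comp_le_of_adj {V : Type} [Fintype V] [DecidableEq V] (G : SimpleGraph V)
    (P Q : Finpartition (Finset.univ : Finset V))
    (hP : ∀ s ∈ P.parts, (G.induce (s : Set V)).Connected)
    (h : ∀ u v, G.Adj u v → P.part u = P.part v → Q.part u = Q.part v)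
    (u v : V) (huv : P.part u = P.part v) : Q.part u = Q.part v := by
  have hc := hP (P.part u) (P.part_mem.2 (Finset.mem_univ u))
  have hu : u ∈ (P.part u : Set V) := by simp
  have hv : v ∈ (P.part u : Set V) := by rw [huv]; simp
  obtain ⟨w⟩ := hc.preconnected ⟨u, hu⟩ ⟨v, hv⟩
  have key : ∀ (x y : ((P.part u : Finset V) : Set V)),
      (G.induce ((P.part u : Finset V) : Set V)).Walk x y → Q.part x.1 = Q.part y.1 := by
    intro x y w
    induction w with
    | nil => rfl
    | @cons a b c hab _ ih =>
      refine Eq.trans (h _ _ hab ?_) ih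
      have h1 := P.part_eq_of_mem (P.part_mem.2 (Finset.mem_univ u)) a.2
      have h2 := P.part_eq_of_mem (P.part_mem.2 (Finset.mem_univ u)) b.2
      exact h1.trans h2.symm
  exact key _ _ w

lemma finpart_ext {V : Type} [Fintype V] [DecidableEq V]
    (P Q : Finpartition (Finset.univ : Finset V))
    (h : ∀ u v, P.part u = P.part v ↔ Q.part u = Q.part v) : P = Q := by
  have hp : ∀ u, P.part u = Q.part u := by
    intro u
    ext v
    rw [P.mem_part_iff_part_eq_part (Finset.mem_univ _) (Finset.mem_univ _),
      Q.mem_part_iff_part_eq_part (Finset.mem_univ _) (Finset.mem_univ _), h]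
  have sub : ∀ (P Q : Finpartition (Finset.univ : Finset V)),
      (∀ u, P.part u = Q.part u) → P.parts ⊆ Q.parts := by
    intro P Q hp s hs
    obtain ⟨u, hu⟩ := P.nonempty_of_mem_parts hs
    rw [← P.part_eq_of_mem hs hu, hp]
    exact Q.part_mem.2 (Finset.mem_univ u)
  exact Finpartition.ext (Finset.Subset.antisymm (sub P Q hp) (sub Q P fun u => (hp u).symm))

/-- The composition obtained from a colouring: components of monochromatic edges. -/
lemma exists_comp_of_coloring {V : Type} [Fintype V] [DecidableEq V] (G : SimpleGraph V)
    (f : V → ℕ) : ∃ P : Finpartition (Finset.univ : Finset V),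
      (∀ s ∈ P.parts, (G.induce (s : Set V)).Connected) ∧
      ∀ u v, G.Adj u v → (P.part u = P.part v ↔ f u = f v) := by
  classical
  let H : SimpleGraph V :=
    { Adj := fun u v => G.Adj u v ∧ f u = f v
      symm := ⟨fun u v h => ⟨h.1.symm, h.2.symm⟩⟩
      loopless := ⟨fun u h => G.loopless.irrefl u h.1⟩ }
  have hf : ∀ u v, H.Reachable u v → f u = f v := by
    rintro u v ⟨w⟩
    induction w with
    | nil => rfl
    | cons hab _ ih => exact hab.2.trans ih
  let P := Finpartition.ofSetoid H.reachableSetoid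
  have hP : ∀ u v, v ∈ P.part u ↔ H.Reachable u v := fun u v =>
    Finpartition.mem_part_ofSetoid_iff_rel
  refine ⟨P, ?_, ?_⟩
  · intro s hs
    obtain ⟨u, hu⟩ := P.nonempty_of_mem_parts hs
    have hsu := P.part_eq_of_mem hs hu
    have hset : (s : Set V) = (H.connectedComponentMk u).supp := by
      ext v
      rw [← hsu, Finset.mem_coe, hP, SimpleGraph.ConnectedComponent.mem_supp_iff,
        SimpleGraph.ConnectedComponent.eq]
      exact ⟨fun h => h.symm, fun h => h.symm⟩
    rw [hset]
    have hc := (SimpleGraph.ConnectedComponent.maximal_connected_induce_supp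
      (H.connectedComponentMk u)).prop
    have hle : H ≤ G := fun a b h => h.1
    exact hc.mono (fun a b h => hle h)
  · intro u v huv
    rw [eq_comm, ← P.mem_part_iff_part_eq_part (Finset.mem_univ _) (Finset.mem_univ _), hP]
    exact ⟨hf u v, fun h => SimpleGraph.Adj.reachable (G := H) ⟨huv, h⟩⟩

/-- A square of the ladder is fine if it does not have exactly three joined edges. -/
def sqOk (a : Bool) (h : Bool × Bool) (b : Bool) : Prop :=
  a.toNat + h.1.toNat + h.2.toNat + b.toNat ≠ 3

instance (a : Bool) (h : Bool × Bool) (b : Bool) : Decidable (sqOk a h b) := by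
  unfold sqOk; infer_instance

/-- Valid labellings of the ladder with `n + 1` columns: rungs and horizontal pairs. -/
def Lab (n : ℕ) : Type :=
  {x : (Fin (n + 1) → Bool) × (Fin n → Bool × Bool) //
    ∀ i, sqOk (x.1 i.castSucc) (x.2 i) (x.1 i.succ)}

/-- Valid labellings with given first rung. -/
def LabB (n : ℕ) (b : Bool) : Type :=
  {x : (Fin (n + 1) → Bool) × (Fin n → Bool × Bool) //
    x.1 0 = b ∧ ∀ i, sqOk (x.1 i.castSucc) (x.2 i) (x.1 i.succ)}

noncomputable instance (n : ℕ) : Fintype (Lab n) := by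
  classical unfold Lab; infer_instance

noncomputable instance (n : ℕ) (b : Bool) : Fintype (LabB n b) := by
  classical unfold LabB; infer_instance

/-- Split by the first rung. -/
def labSplit (n : ℕ) : Lab n ≃ Σ b, LabB n b where
  toFun x := ⟨x.1.1 0, ⟨x.1, rfl, x.2⟩⟩
  invFun y := ⟨y.2.1, y.2.2.2⟩
  left_inv x := rfl
  right_inv := by rintro ⟨b, ⟨x, rfl, h⟩⟩; rfl

/-- Peel off the first column. -/
def labStep (n : ℕ) (b : Bool) :
    LabB (n + 1) b ≃ Σ p : {p : Bool × (Bool × Bool) // sqOk b p.2 p.1}, LabB n p.1.1 where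
  toFun x := ⟨⟨(x.1.1 1, x.1.2 0), by
    obtain ⟨x, rfl, hx⟩ := x
    exact hx 0⟩,
    ⟨(fun i => x.1.1 i.succ, fun i => x.1.2 i.succ), rfl, fun i => x.2.2 i.succ⟩⟩
  invFun y := ⟨(Fin.cons b y.2.1.1, Fin.cons y.1.1.2 y.2.1.2), rfl, by
    intro i
    refine Fin.cases ?_ (fun i => ?_) i
    · have := y.1.2
      have h0 := y.2.2.1
      simpa [h0] using this
    · have := y.2.2.2 i
      simpa [← Fin.succ_castSucc] using this⟩
  left_inv := by
    rintro ⟨⟨r, h⟩, rfl, hx⟩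
    apply Subtype.ext
    refine Prod.ext ?_ ?_
    · funext i; refine Fin.cases rfl (fun i => rfl) i
    · funext i; refine Fin.cases rfl (fun i => rfl) i
  right_inv := by
    rintro ⟨⟨⟨b', h⟩, hp⟩, ⟨⟨r, g⟩, h0, hx⟩⟩
    have h1 : r 0 = b' := h0
    subst h1
    rfl

lemma card_LabB_succ (n : ℕ) (b : Bool) :
    Fintype.card (LabB (n + 1) b) =
      ∑ p : Bool × (Bool × Bool), if sqOk b p.2 p.1 then Fintype.card (LabB n p.1) else 0 := by
  rw [Fintype.card_congr (labStep n b), Fintype.card_sigma, ← Finset.sum_filter]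
  exact (Finset.sum_subtype (Finset.univ.filter fun p : Bool × (Bool × Bool) => sqOk b p.2 p.1)
    (by simp) (fun p => Fintype.card (LabB n p.1))).symm

lemma card_LabB_true (n : ℕ) : Fintype.card (LabB (n + 1) true) =
    2 * Fintype.card (LabB n true) + 3 * Fintype.card (LabB n false) := by
  rw [card_LabB_succ]
  simp [Fintype.sum_prod_type, sqOk]
  ring

lemma card_LabB_false (n : ℕ) : Fintype.card (LabB (n + 1) false) =
    3 * Fintype.card (LabB n true) + 4 * Fintype.card (LabB n false) := by
  rw [card_LabB_succ]
  simp [Fintype.sum_prod_type, sqOk]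
  ring

lemma card_LabB_zero (b : Bool) : Fintype.card (LabB 0 b) = 1 := by
  rw [Fintype.card_eq_one_iff]
  refine ⟨⟨(fun _ => b, fun i => i.elim0), rfl, fun i => i.elim0⟩, ?_⟩
  rintro ⟨⟨r, h⟩, rfl, hx⟩
  apply Subtype.ext
  refine Prod.ext ?_ ?_
  · funext i; have hi : i = 0 := by omega
    rw [hi]
  · funext i; exact i.elim0

lemma card_Lab (n : ℕ) : Fintype.card (Lab n) =
    Fintype.card (LabB n true) + Fintype.card (LabB n false) := by
  rw [Fintype.card_congr (labSplit n), Fintype.card_sigma]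
  simp

/-- The colouring of the ladder built from edge labels, column by column. -/
def ladCol (R A B : ℕ → Bool) : ℕ → ℕ × ℕ
  | 0 => (0, if R 0 then 0 else 1)
  | i + 1 =>
    let p := ladCol R A B i
    let t := if A i then p.1 else if R (i + 1) && B i then p.2 else 2 * i + 2
    (t, if B i then p.2 else if R (i + 1) then t else 2 * i + 3)

lemma ladCol_lt (R A B : ℕ → Bool) (i : ℕ) :
    (ladCol R A B i).1 < 2 * i + 2 ∧ (ladCol R A B i).2 < 2 * i + 2 := by
  induction i with
  | zero => simp only [ladCol]; split_ifs <;> omega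
  | succ i ih => simp only [ladCol]; split_ifs <;> omega

lemma ladCol_rung (R A B : ℕ → Bool) (n : ℕ)
    (h : ∀ i < n, sqOk (R i) (A i, B i) (R (i + 1))) (i : ℕ) (hi : i ≤ n) :
    ((ladCol R A B i).1 = (ladCol R A B i).2 ↔ R i = true) := by
  induction i with
  | zero => simp only [ladCol]; split_ifs <;> simp_all
  | succ i ih =>
    have hs := h i (by omega)
    have ih := ih (by omega)
    have hl := ladCol_lt R A B i
    simp only [ladCol]
    unfold sqOk at hs
    revert hs ih
    cases R i <;> cases R (i + 1) <;> cases A i <;> cases B i <;> simp <;> omega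

lemma ladCol_horiz (R A B : ℕ → Bool) (n : ℕ)
    (h : ∀ i < n, sqOk (R i) (A i, B i) (R (i + 1))) (i : ℕ) (hi : i < n) :
    ((ladCol R A B i).1 = (ladCol R A B (i + 1)).1 ↔ A i = true) ∧
    ((ladCol R A B i).2 = (ladCol R A B (i + 1)).2 ↔ B i = true) := by
  have hs := h i (by omega)
  have ih := ladCol_rung R A B n h i (by omega)
  have hl := ladCol_lt R A B i
  simp only [ladCol]
  unfold sqOk at hs
  revert hs ih
  cases R i <;> cases R (i + 1) <;> cases A i <;> cases B i <;> simp <;> omega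

lemma ladder_adj_rung (n : ℕ) (i : Fin n) : (ladderGraph n).Adj (i, 0) (i, 1) := by
  simp [SimpleGraph.boxProd_adj, SimpleGraph.pathGraph_adj]

lemma ladder_adj_horiz (n : ℕ) (i : Fin n) (j : Fin 2) :
    (ladderGraph (n + 1)).Adj (i.castSucc, j) (i.succ, j) := by
  simp [SimpleGraph.boxProd_adj, SimpleGraph.pathGraph_adj]

/-- Symmetric relations holding on rungs and horizontals hold on all edges. -/
lemma ladder_adj_ind (n : ℕ) (p : Fin (n + 1) × Fin 2 → Fin (n + 1) × Fin 2 → Prop)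
    (hsymm : ∀ u v, p u v → p v u) (hr : ∀ i, p (i, 0) (i, 1))
    (hh : ∀ (i : Fin n) (j : Fin 2), p (i.castSucc, j) (i.succ, j))
    (u v : Fin (n + 1) × Fin 2) (huv : (ladderGraph (n + 1)).Adj u v) : p u v := by
  obtain ⟨i, j⟩ := u
  obtain ⟨i', j'⟩ := v
  have hstep : ∀ (a b : Fin (n + 1)) (j : Fin 2), a.val + 1 = b.val → p (a, j) (b, j) := by
    intro a b j hab
    have := hh ⟨a.val, by omega⟩ j
    have e1 : (Fin.castSucc ⟨a.val, by omega⟩ : Fin (n + 1)) = a := Fin.ext rfl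
    have e2 : (Fin.succ ⟨a.val, by omega⟩ : Fin (n + 1)) = b := Fin.ext hab
    rwa [e1, e2] at this
  simp only [SimpleGraph.boxProd_adj, SimpleGraph.pathGraph_adj] at huv
  rcases huv with ⟨h | h, rfl⟩ | ⟨h, rfl⟩
  · exact hstep _ _ _ h
  · exact hsymm _ _ (hstep _ _ _ h)
  · fin_cases j <;> fin_cases j' <;> simp at h
    · exact hr i
    · exact hsymm _ _ (hr i)

/-- Compositions of a graph. -/
abbrev LComp (n : ℕ) : Type :=
  {P : Finpartition (Finset.univ : Finset (Fin n × Fin 2)) //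
    ∀ s ∈ P.parts, ((ladderGraph n).induce (s : Set (Fin n × Fin 2))).Connected}

/-- Edge labels of a composition of a ladder. -/
def compLab (n : ℕ) (P : LComp (n + 1)) : Lab n :=
  ⟨(fun i => decide (P.1.part (i, 0) = P.1.part (i, 1)),
    fun i => (decide (P.1.part (i.castSucc, 0) = P.1.part (i.succ, 0)),
      decide (P.1.part (i.castSucc, 1) = P.1.part (i.succ, 1)))), by
    intro i
    simp only [sqOk]
    generalize P.1.part (i.castSucc, 0) = a
    generalize P.1.part (i.castSucc, 1) = b
    generalize P.1.part (i.succ, 0) = c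
    generalize P.1.part (i.succ, 1) = d
    by_cases h1 : a = b <;> by_cases h2 : a = c <;> by_cases h3 : b = d <;>
      by_cases h4 : c = d <;> simp_all⟩

lemma compLab_inj (n : ℕ) : Function.Injective (compLab n) := by
  intro P Q h
  have hv := congrArg Subtype.val h
  have hr := congrArg Prod.fst hv
  have hh := congrArg Prod.snd hv
  have key : ∀ u v, (ladderGraph (n + 1)).Adj u v →
      (P.1.part u = P.1.part v ↔ Q.1.part u = Q.1.part v) := by
    apply ladder_adj_ind n
    · intro u v h
      rw [eq_comm, h, eq_comm]
    · intro i
      have := congrFun hr i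
      simpa [compLab] using this
    · intro i j
      have := congrFun hh i
      simp only [compLab, Prod.mk.injEq, decide_eq_decide] at this
      fin_cases j
      · exact this.1
      · exact this.2
  apply Subtype.ext
  apply finpart_ext
  intro u v
  exact ⟨comp_le_of_adj _ P.1 Q.1 P.2 (fun a b hab => (key a b hab).1) u v,
    comp_le_of_adj _ Q.1 P.1 Q.2 (fun a b hab => (key a b hab).2) u v⟩

lemma compLab_surj (n : ℕ) : Function.Surjective (compLab n) := by
  rintro ⟨⟨r, h⟩, hx⟩
  let R : ℕ → Bool := fun i => if hi : i < n + 1 then r ⟨i, hi⟩ else false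
  let A : ℕ → Bool := fun i => if hi : i < n then (h ⟨i, hi⟩).1 else false
  let B : ℕ → Bool := fun i => if hi : i < n then (h ⟨i, hi⟩).2 else false
  have hR : ∀ i : Fin (n + 1), R i = r i := fun i => by
    simp only [R, i.2, dif_pos]
  have hA : ∀ i : Fin n, A i = (h i).1 := fun i => by simp [A]
  have hB : ∀ i : Fin n, B i = (h i).2 := fun i => by simp [B]
  have hok : ∀ i < n, sqOk (R i) (A i, B i) (R (i + 1)) := by
    intro i hi
    have := hx ⟨i, hi⟩
    have e1 := hR (Fin.castSucc ⟨i, hi⟩)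
    have e2 := hR (Fin.succ ⟨i, hi⟩)
    have e3 := hA ⟨i, hi⟩
    have e4 := hB ⟨i, hi⟩
    simp only [Fin.val_castSucc, Fin.val_succ] at e1 e2 e3 e4
    rw [e1, e2, e3, e4]
    exact this
  let f : Fin (n + 1) × Fin 2 → ℕ := fun u =>
    if u.2 = 0 then (ladCol R A B u.1).1 else (ladCol R A B u.1).2
  obtain ⟨P, hP, hPf⟩ := exists_comp_of_coloring (ladderGraph (n + 1)) f
  refine ⟨⟨P, hP⟩, ?_⟩
  apply Subtype.ext
  refine Prod.ext ?_ ?_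
  · funext i
    have h1 := hPf _ _ (ladder_adj_rung (n + 1) i)
    have h2 := ladCol_rung R A B n hok i (by omega)
    rw [hR] at h2
    rw [Bool.eq_iff_iff]
    simp only [compLab, decide_eq_true_eq]
    rw [h1, ← h2]
    simp [f]
  · funext i
    have h1 := hPf _ _ (ladder_adj_horiz n i 0)
    have h2 := hPf _ _ (ladder_adj_horiz n i 1)
    have h3 := ladCol_horiz R A B n hok i i.2
    rw [hA, hB] at h3
    refine Prod.ext ?_ ?_
    · rw [Bool.eq_iff_iff]
      simp only [compLab, decide_eq_true_eq]
      rw [h1, ← h3.1]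
      simp [f]
    · rw [Bool.eq_iff_iff]
      simp only [compLab, decide_eq_true_eq]
      rw [h2, ← h3.2]
      simp [f]

lemma num_eq (n : ℕ) : numGraphCompositions (ladderGraph (n + 1)) =
    Fintype.card (LabB n true) + Fintype.card (LabB n false) := by
  rw [← card_Lab, ← Nat.card_eq_fintype_card]
  exact Nat.card_congr (Equiv.ofBijective (compLab n) ⟨compLab_inj n, compLab_surj n⟩)

/-- `C(L_1) = 2`, `C(L_2) = 12`, and `C(L_n) = 6·C(L_{n-1}) + C(L_{n-2})` for `n > 2`. -/
theorem numGraphCompositions_ladder :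
    numGraphCompositions (ladderGraph 1) = 2 ∧
    numGraphCompositions (ladderGraph 2) = 12 ∧
    (∀ n : ℕ, 2 < n →
      numGraphCompositions (ladderGraph n) =
        6 * numGraphCompositions (ladderGraph (n - 1)) +
          numGraphCompositions (ladderGraph (n - 2))) := by
  refine ⟨?_, ?_, ?_⟩
  · rw [num_eq 0, card_LabB_zero, card_LabB_zero]
  · rw [num_eq 1, card_LabB_true, card_LabB_false, card_LabB_zero, card_LabB_zero]
  · intro n hn
    obtain ⟨m, rfl⟩ : ∃ m, n = m + 3 := ⟨n - 3, by omega⟩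
    have e1 : m + 3 - 1 = (m + 1) + 1 := rfl
    have e2 : m + 3 - 2 = m + 1 := rfl
    rw [e1, e2, num_eq (m + 2), num_eq (m + 1), num_eq m, card_LabB_true (m + 1),
      card_LabB_false (m + 1), card_LabB_true m, card_LabB_false m]
    ring
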